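/- Let p be an odd prime, G a finite powerful p-group, and i ≥ 1. Then [Ω_i(G^{p²}), Ω_i(G^p)] ≤ (Ω_i(G^p))^{p²}. -/

import Mathlib

/-- The subgroup generated by the `n`-th powers of the elements of `H`. -/
def subgroupPow {G : Type*} [Group G] (H : Subgroup G) (n : ℕ) : Subgroup G :=
  Subgroup.closure {x | ∃ h ∈ H, h ^ n = x}

/-- `Ω_i(H)`: the subgroup generated by the elements of `H` whose order divides `p ^ i`. -/
def omegaSubgroup {G : Type*} [Group G] (p i : ℕ) (H : Subgroup G) : Subgroup G :=
  Subgroup.closure {x | x ∈ H ∧ x ^ p ^ i = 1}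

/-- A finite `p`-group `G` is powerful if `[G,G] ≤ G^p` when `p` is odd,
and `[G,G] ≤ G^4` when `p = 2`. -/
def IsPowerful (p : ℕ) (G : Type*) [Group G] : Prop :=
  if p = 2 then commutator G ≤ subgroupPow (⊤ : Subgroup G) 4
  else commutator G ≤ subgroupPow (⊤ : Subgroup G) p

/-- The subgroup of `n`-th powers of the whole group is normal (indeed characteristic). -/
instance subgroupPow_top_normal {G : Type*} [Group G] (n : ℕ) :
    (subgroupPow (⊤ : Subgroup G) n).Normal := by
  constructor
  intro x hx g
  have key : Subgroup.map (MulAut.conj g).toMonoidHom (subgroupPow (⊤ : Subgroup G) n)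
      ≤ subgroupPow (⊤ : Subgroup G) n := by
    rw [subgroupPow, MonoidHom.map_closure]
    apply Subgroup.closure_le _ |>.mpr
    rintro y ⟨z, ⟨h, -, rfl⟩, rfl⟩
    exact Subgroup.subset_closure ⟨(MulAut.conj g) h, trivial, by
      simp [((MulAut.conj g).toMonoidHom.map_pow h n).symm]⟩
  have hmem : (MulAut.conj g) x ∈
      Subgroup.map (MulAut.conj g).toMonoidHom (subgroupPow (⊤ : Subgroup G) n) :=
    Subgroup.mem_map_of_mem _ hx
  simpa [MulAut.conj_apply] using key hmem

/-- A powerfully central chain `{1} = H 0 ≤ H 1 ≤ ⋯ ≤ H n = G` of length `n`: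
`[H (k+1), G] ≤ (H k)^p` for all `k < n`. -/
def IsPowerfullyCentralChain (p : ℕ) {G : Type*} [Group G] (n : ℕ) (H : ℕ → Subgroup G) : Prop :=
  H 0 = ⊥ ∧ H n = ⊤ ∧ (∀ k, k < n → H k ≤ H (k + 1)) ∧
    ∀ k, k < n → ⁅H (k + 1), (⊤ : Subgroup G)⁆ ≤ subgroupPow (H k) p

/-- A group is powerfully nilpotent if it is powerful and admits a powerfully central chain. -/
def IsPowerfullyNilpotent (p : ℕ) (G : Type*) [Group G] : Prop :=
  IsPowerful p G ∧ ∃ (n : ℕ) (H : ℕ → Subgroup G), IsPowerfullyCentralChain p n H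

/-- The powerful nilpotency class: the least possible length of a powerfully central chain. -/
noncomputable def powerfulNilpotencyClass (p : ℕ) (G : Type*) [Group G] : ℕ :=
  sInf {n | ∃ H : ℕ → Subgroup G, IsPowerfullyCentralChain p n H}

open scoped commutatorElement

/-!
Write `P_0 = G` and `P_{k+1} = (P_k)^p`. For odd `p` and powerful `G` one has
`[P_j, P_k] ≤ P_{j+k+1}`, and every element of `P_{j+k}` is the `p ^ k`-th power of an element of
`P_j`.

Let `k < j` and let `a ∈ P_j`, `b ∈ P_k` have orders dividing `p ^ i`. Then `[a, b] = g ^ p ^ (k+1)`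
with `g ∈ P_j`, and all that is needed is `g ^ p ^ i = 1`, that is, `[a, b] ^ p ^ (i - k - 1) = 1`.
Writing `a = x ^ p ^ j` and `b = y ^ p ^ k`, this is a case of the following estimate of
Fernández-Alcober: if `s = m + j + k`, `x ^ p ^ (s + 1) = 1` and `y ^ p ^ s = 1`, then
`[x ^ p ^ j, y ^ p ^ k] ^ p ^ m = 1`.

The estimate is proved together with Wilson's theorem that `Ω_m(G)` has exponent dividing `p ^ m`,
by induction on the order of `G`:

* If `y ^ p ^ m = 1`, then `[x, y]` is a product of two elements of order dividing `p ^ m` in the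
  powerful subgroup `⟨y⟩ G^p`, which is proper unless `G` is cyclic. This is the case `j = k = 0`.
* In general the estimate follows by descending induction on `s` and ascending induction on `j` and
  `k`. With `u = [b, c]`, the commutator `[b, c ^ p]` equals `u ^ p` up to powers of `[c, u] ^ p`
  and the commutators `[c, u, c]`, `[c, u, u]`; the latter are covered by the estimate for larger
  `s`, and everything happens in `Ω_m(G^p)`, which has exponent dividing `p ^ m` by induction.
* Wilson's theorem for `G` follows by expanding `(x * y) ^ p` modulo `Ω_m(G^p)`.
-/

/-! ### Commutators and generators -/

section Commutator

variable {G : Type*} [Group G]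

theorem commutatorElement_mem_iff_commute_mk {N : Subgroup G} [N.Normal] {a b : G} :
    ⁅a, b⁆ ∈ N ↔ Commute (a : G ⧸ N) (b : G ⧸ N) := by
  rw [← QuotientGroup.eq_one_iff, ← commutatorElement_eq_one_iff_commute]
  rfl

theorem commutatorElement_mem_of_mem_left {N : Subgroup G} [N.Normal] {a : G} (ha : a ∈ N)
    (g : G) : ⁅a, g⁆ ∈ N :=
  Subgroup.commutator_le_left N ⊤ (Subgroup.commutator_mem_commutator ha (Subgroup.mem_top g))

theorem closure_normal_of_conj_mem {S : Set G} (h : ∀ s ∈ S, ∀ g : G, g * s * g⁻¹ ∈ S) :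
    (Subgroup.closure S).Normal where
  conj_mem _ hx g :=
    (Subgroup.closure_le ((Subgroup.closure S).comap (MulAut.conj g).toMonoidHom)).2
      (fun s hs => Subgroup.subset_closure (h s hs g)) hx

theorem commutator_closure_closure_le {A B : Set G} {N : Subgroup G} [N.Normal]
    (h : ∀ a ∈ A, ∀ b ∈ B, ⁅a, b⁆ ∈ N) : ⁅Subgroup.closure A, Subgroup.closure B⁆ ≤ N := by
  rw [← QuotientGroup.ker_mk' N, ← Subgroup.map_eq_bot_iff, Subgroup.map_commutator,
    MonoidHom.map_closure, MonoidHom.map_closure, Subgroup.commutator_eq_bot_iff_le_centralizer,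
    Subgroup.centralizer_closure, Subgroup.closure_le]
  rintro _ ⟨a, ha, rfl⟩ _ ⟨b, hb, rfl⟩
  exact (commutatorElement_mem_iff_commute_mk.1 (h a ha b hb)).symm

theorem commutator_zpowers_sup_le {A N : Subgroup G} [N.Normal]
    (hA : ⁅(⊤ : Subgroup G), A⁆ ≤ N) (y : G) :
    ⁅Subgroup.zpowers y ⊔ A, Subgroup.zpowers y ⊔ A⁆ ≤ N := by
  have hgen : Subgroup.zpowers y ⊔ A = Subgroup.closure ({y} ∪ A) := by
    rw [Subgroup.closure_union, Subgroup.closure_eq, Subgroup.zpowers_eq_closure]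
  have hright : ∀ g, ∀ a ∈ A, ⁅g, a⁆ ∈ N := fun g a ha =>
    hA (Subgroup.commutator_mem_commutator (Subgroup.mem_top g) ha)
  rw [hgen]
  refine commutator_closure_closure_le ?_
  rintro a (rfl | ha) b (rfl | hb)
  · rw [commutatorElement_self]
    exact one_mem N
  · exact hright _ b hb
  · exact commutatorElement_inv _ a ▸ inv_mem (hright _ a ha)
  · exact hright _ b hb

theorem eq_bot_of_le_commutator_top [Group.IsNilpotent G] {K : Subgroup G}
    (h : K ≤ ⁅K, (⊤ : Subgroup G)⁆) : K = ⊥ := by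
  have hle : ∀ n, K ≤ (⊤ : Subgroup G).lowerCentralSeries n := by
    intro n
    induction n with
    | zero => exact le_top
    | succ n ih => exact h.trans (Subgroup.commutator_mono ih le_rfl)
  obtain ⟨n, hn⟩ := Subgroup.nilpotent_iff_lowerCentralSeries.1 ‹Group.IsNilpotent G›
  exact le_bot_iff.1 (hn ▸ hle n)

theorem le_of_le_sup_commutator_top [Group.IsNilpotent G] {K L : Subgroup G} [L.Normal]
    (h : K ≤ L ⊔ ⁅K, (⊤ : Subgroup G)⁆) : K ≤ L := by
  let π := QuotientGroup.mk' L
  have hL : L.map π = ⊥ := (Subgroup.map_eq_bot_iff L).2 (QuotientGroup.ker_mk' L).ge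
  have htop : (⊤ : Subgroup G).map π = ⊤ :=
    Subgroup.map_top_of_surjective π (QuotientGroup.mk'_surjective L)
  have hK : K.map π ≤ ⁅K.map π, ⊤⁆ := by
    simpa only [Subgroup.map_sup, hL, bot_sup_eq, Subgroup.map_commutator, htop]
      using Subgroup.map_mono (f := π) h
  rw [← QuotientGroup.ker_mk' L, ← Subgroup.map_eq_bot_iff]
  exact eq_bot_of_le_commutator_top hK

end Commutator

/-! ### Power and omega subgroups -/

section PowerSubgroup

variable {G : Type*} [Group G]

instance subgroupPow_normal (N : Subgroup G) [hN : N.Normal] (n : ℕ) :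
    (subgroupPow N n).Normal := by
  refine closure_normal_of_conj_mem ?_
  rintro _ ⟨h, hh, rfl⟩ g
  exact ⟨g * h * g⁻¹, hN.conj_mem h hh g, conj_pow⟩

theorem pow_mem_subgroupPow {H : Subgroup G} {x : G} (hx : x ∈ H) (n : ℕ) :
    x ^ n ∈ subgroupPow H n :=
  Subgroup.subset_closure ⟨x, hx, rfl⟩

theorem subgroupPow_le_iff {H K : Subgroup G} {n : ℕ} :
    subgroupPow H n ≤ K ↔ ∀ x ∈ H, x ^ n ∈ K := by
  rw [subgroupPow, Subgroup.closure_le]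
  exact Set.forall_mem_image

theorem subgroupPow_mono {H K : Subgroup G} (h : H ≤ K) (n : ℕ) :
    subgroupPow H n ≤ subgroupPow K n :=
  subgroupPow_le_iff.2 fun _ hx => pow_mem_subgroupPow (h hx) n

theorem subgroupPow_le_of_dvd (H : Subgroup G) {m n : ℕ} (h : m ∣ n) :
    subgroupPow H n ≤ subgroupPow H m := by
  obtain ⟨d, rfl⟩ := h
  exact subgroupPow_le_iff.2 fun x hx => pow_mul x m d ▸ pow_mem (pow_mem_subgroupPow hx m) d

theorem map_subgroupPow {G' : Type*} [Group G'] (f : G →* G') (H : Subgroup G) (n : ℕ) :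
    (subgroupPow H n).map f = subgroupPow (H.map f) n := by
  refine le_antisymm (Subgroup.map_le_iff_le_comap.2 (subgroupPow_le_iff.2 fun x hx => ?_))
    (subgroupPow_le_iff.2 ?_)
  · rw [Subgroup.mem_comap, map_pow]
    exact pow_mem_subgroupPow (Subgroup.mem_map_of_mem f hx) n
  · rintro _ ⟨x, hx, rfl⟩
    exact ⟨x ^ n, pow_mem_subgroupPow hx n, map_pow f x n⟩

theorem map_subtype_subgroupPow_top (H : Subgroup G) (n : ℕ) :
    (subgroupPow (⊤ : Subgroup H) n).map H.subtype = subgroupPow H n := by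
  rw [map_subgroupPow, ← MonoidHom.range_eq_map, Subgroup.range_subtype]

theorem commutator_coe_le_subgroupPow_iff {H : Subgroup G} {n : ℕ} :
    commutator H ≤ subgroupPow (⊤ : Subgroup H) n ↔ ⁅H, H⁆ ≤ subgroupPow H n := by
  rw [← Subgroup.map_subtype_commutator, ← map_subtype_subgroupPow_top H n,
    Subgroup.map_le_map_iff_of_injective H.subtype_injective]

theorem exists_pow_eq_of_mem_subgroupPow_top {n : ℕ} (hmul : ∀ a b : G, (a * b) ^ n = a ^ n * b ^ n)
    {g : G} (hg : g ∈ subgroupPow (⊤ : Subgroup G) n) : ∃ x : G, x ^ n = g :=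
  have hrange : subgroupPow ⊤ n ≤ (MonoidHom.mk' (· ^ n) hmul).range :=
    subgroupPow_le_iff.2 fun x _ => ⟨x, rfl⟩
  hrange hg

instance omegaSubgroup_normal (p i : ℕ) (N : Subgroup G) [hN : N.Normal] :
    (omegaSubgroup p i N).Normal := by
  refine closure_normal_of_conj_mem ?_
  rintro s ⟨hs, hs1⟩ g
  exact ⟨hN.conj_mem s hs g, by rw [conj_pow, hs1, mul_one, mul_inv_cancel]⟩

theorem mem_omegaSubgroup {p i : ℕ} {H : Subgroup G} {x : G} (hx : x ∈ H) (hx1 : x ^ p ^ i = 1) :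
    x ∈ omegaSubgroup p i H :=
  Subgroup.subset_closure ⟨hx, hx1⟩

theorem pow_mem_omegaSubgroup {p i : ℕ} {H : Subgroup G} {x : G} (hx : x ^ p ∈ H)
    (hx1 : x ^ p ^ (i + 1) = 1) : x ^ p ∈ omegaSubgroup p i H :=
  mem_omegaSubgroup hx (by rw [← pow_mul, ← pow_succ', hx1])

theorem omegaSubgroup_mono (p i : ℕ) {H K : Subgroup G} (h : H ≤ K) :
    omegaSubgroup p i H ≤ omegaSubgroup p i K :=
  Subgroup.closure_mono fun _ hx => ⟨h hx.1, hx.2⟩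

theorem omegaSubgroup_le_map_subtype (p i : ℕ) (H : Subgroup G) :
    omegaSubgroup p i H ≤ (omegaSubgroup p i (⊤ : Subgroup H)).map H.subtype := by
  rw [omegaSubgroup, Subgroup.closure_le]
  rintro x ⟨hx, hx1⟩
  exact ⟨⟨x, hx⟩, mem_omegaSubgroup (Subgroup.mem_top _) (Subtype.ext hx1), rfl⟩

theorem pow_pow_eq_one_of_le {p a b : ℕ} {x : G} (hx : x ^ p ^ a = 1) (h : a ≤ b) :
    x ^ p ^ b = 1 := by
  rw [← Nat.add_sub_cancel' h, pow_add, pow_mul, hx, one_pow]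

end PowerSubgroup

/-! ### Powers of products in class two -/

section ClassTwo

variable {G : Type*} [Group G]

theorem pow_mul_eq_commutatorElement_pow_mul {x u : G} (h : Commute ⁅x, u⁆ x) (n : ℕ) :
    x ^ n * u = ⁅x, u⁆ ^ n * (u * x ^ n) := by
  have hconj : u * x * u⁻¹ = ⁅x, u⁆⁻¹ * x := by rw [commutatorElement_def]; group
  have hpow : u * x ^ n * u⁻¹ = (⁅x, u⁆ ^ n)⁻¹ * x ^ n := by
    rw [← conj_pow, hconj, h.inv_left.mul_pow, inv_pow]
  rw [eq_inv_mul_iff_mul_eq, ← mul_assoc, mul_inv_eq_iff_eq_mul] at hpow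
  exact hpow.symm

theorem mul_pow_eq_commutatorElement_pow_choose_mul {u x : G} (hx : Commute ⁅x, u⁆ x)
    (hu : Commute ⁅x, u⁆ u) (n : ℕ) :
    (u * x) ^ n = ⁅x, u⁆ ^ n.choose 2 * (u ^ n * x ^ n) := by
  induction n with
  | zero => simp
  | succ n ih =>
    set w := ⁅x, u⁆
    calc (u * x) ^ (n + 1) = w ^ n.choose 2 * (u ^ n * (x ^ n * u) * x) := by
          rw [pow_succ, ih]; simp only [mul_assoc]
      _ = w ^ n.choose 2 * (w ^ n * (u ^ n * u * (x ^ n * x))) := by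
          rw [pow_mul_eq_commutatorElement_pow_mul hx, ← mul_assoc (u ^ n), ← (hu.pow_pow n n).eq]
          simp only [mul_assoc]
      _ = w ^ (n + 1).choose 2 * (u ^ (n + 1) * x ^ (n + 1)) := by
          rw [← mul_assoc, ← pow_add, ← pow_succ, ← pow_succ, Nat.choose_succ_succ' n 1,
            Nat.choose_one_right, add_comm (n.choose 2)]

theorem dvd_choose_two_of_odd {n : ℕ} (hn : Odd n) : n ∣ n.choose 2 := by
  obtain ⟨k, rfl⟩ := hn
  refine ⟨k, ?_⟩
  rw [Nat.choose_two_right, Nat.add_sub_cancel, mul_left_comm, Nat.mul_div_cancel_left _ two_pos]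

theorem mk_mul_pow_of_odd {n : ℕ} (hn : Odd n) {M : Subgroup G} [M.Normal] {u x : G}
    (hx : ⁅⁅x, u⁆, x⁆ ∈ M) (hu : ⁅⁅x, u⁆, u⁆ ∈ M) (hpow : ⁅x, u⁆ ^ n ∈ M) :
    ((u : G ⧸ M) * x) ^ n = (u : G ⧸ M) ^ n * (x : G ⧸ M) ^ n := by
  obtain ⟨k, hk⟩ := dvd_choose_two_of_odd hn
  have hpow' : ⁅(x : G ⧸ M), (u : G ⧸ M)⁆ ^ n = 1 := (QuotientGroup.eq_one_iff _).2 hpow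
  rw [mul_pow_eq_commutatorElement_pow_choose_mul (commutatorElement_mem_iff_commute_mk.1 hx)
    (commutatorElement_mem_iff_commute_mk.1 hu), hk, pow_mul, hpow', one_pow, one_mul]

-- Expand the `n`-th power of `g * x * g⁻¹ = ⁅g, x⁆ * x`.
theorem commutatorElement_pow_right_mem_of_odd {n : ℕ} (hn : Odd n) {M : Subgroup G} [M.Normal]
    {g x : G} (h₁ : ⁅⁅x, ⁅g, x⁆⁆, x⁆ ∈ M) (h₂ : ⁅⁅x, ⁅g, x⁆⁆, ⁅g, x⁆⁆ ∈ M)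
    (h₃ : ⁅x, ⁅g, x⁆⁆ ^ n ∈ M) (h₄ : ⁅g, x⁆ ^ n ∈ M) : ⁅g, x ^ n⁆ ∈ M := by
  have hconj : ⁅g, x ^ n⁆ = (⁅g, x⁆ * x) ^ n * (x ^ n)⁻¹ := by
    rw [commutatorElement_def, commutatorElement_def, inv_mul_cancel_right, conj_pow]
  have hprod := mk_mul_pow_of_odd hn h₁ h₂ h₃
  rw [← QuotientGroup.eq_one_iff, hconj]
  rw [QuotientGroup.mk_mul, QuotientGroup.mk_pow, QuotientGroup.mk_mul, QuotientGroup.mk_inv,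
    QuotientGroup.mk_pow, hprod, mul_inv_cancel_right]
  exact (QuotientGroup.eq_one_iff _).2 h₄

end ClassTwo

/-! ### The iterated power series -/

/-- The series `P_0 = G`, `P_{k+1} = (P_k)^p`. It is the lower `p`-series of a powerful `p`-group,
in which `P_k` turns out to be `G^{p^k}`, see `IsOddPowerful.powSeries_eq_subgroupPow`. -/
def powSeries (p : ℕ) (G : Type*) [Group G] : ℕ → Subgroup G
  | 0 => ⊤
  | k + 1 => subgroupPow (powSeries p G k) p

section PowSeries

variable {G : Type*} [Group G] {p : ℕ}

instance powSeries_normal (p : ℕ) (G : Type*) [Group G] : ∀ k, (powSeries p G k).Normal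
  | 0 => inferInstanceAs (⊤ : Subgroup G).Normal
  | k + 1 => have := powSeries_normal p G k; subgroupPow_normal (powSeries p G k) p

theorem pow_pow_mem_powSeries (x : G) (k : ℕ) : x ^ p ^ k ∈ powSeries p G k := by
  induction k with
  | zero => exact Subgroup.mem_top _
  | succ k ih =>
    rw [pow_succ, pow_mul]
    exact pow_mem_subgroupPow ih p

variable [Group.IsNilpotent G]

theorem commutator_top_subgroupPow_le (hp : Odd p) {N : Subgroup G} [N.Normal]
    (hN : ⁅(⊤ : Subgroup G), N⁆ ≤ subgroupPow N p) :
    ⁅(⊤ : Subgroup G), subgroupPow N p⁆ ≤ subgroupPow (subgroupPow N p) p := by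
  set A := subgroupPow N p
  set K := ⁅(⊤ : Subgroup G), A⁆
  have hK : ⁅Subgroup.closure (Set.univ : Set G), A⁆ ≤ subgroupPow A p ⊔ ⁅K, (⊤ : Subgroup G)⁆ := by
    refine commutator_closure_closure_le ?_
    rintro g - _ ⟨x, hx, rfl⟩
    have hu : ⁅g, x⁆ ∈ A := hN (Subgroup.commutator_mem_commutator (Subgroup.mem_top g) hx)
    have hw : ⁅x, ⁅g, x⁆⁆ ∈ K := Subgroup.commutator_mem_commutator (Subgroup.mem_top x) hu
    have hw' (z : G) : ⁅⁅x, ⁅g, x⁆⁆, z⁆ ∈ subgroupPow A p ⊔ ⁅K, (⊤ : Subgroup G)⁆ :=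
      Subgroup.mem_sup_right (Subgroup.commutator_mem_commutator hw (Subgroup.mem_top z))
    exact commutatorElement_pow_right_mem_of_odd hp (hw' x) (hw' _)
      (Subgroup.mem_sup_left (pow_mem_subgroupPow (Subgroup.commutator_le_right _ _ hw) p))
      (Subgroup.mem_sup_left (pow_mem_subgroupPow hu p))
  rw [Subgroup.closure_univ] at hK
  exact le_of_le_sup_commutator_top hK

theorem commutator_top_powSeries_le (hp : Odd p) (hG : commutator G ≤ subgroupPow ⊤ p) (k : ℕ) :
    ⁅(⊤ : Subgroup G), powSeries p G k⁆ ≤ powSeries p G (k + 1) := by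
  induction k with
  | zero => exact hG
  | succ k ih => exact commutator_top_subgroupPow_le hp ih

-- Modulo `P_{j+k+2}` the commutator `⁅g, x⁆ ∈ P_{j+k+1}` is central with trivial `p`-th power.
theorem commutator_powSeries_le (hp : Odd p) (hG : commutator G ≤ subgroupPow ⊤ p) (j k : ℕ) :
    ⁅powSeries p G j, powSeries p G k⁆ ≤ powSeries p G (j + k + 1) := by
  induction k with
  | zero =>
    rw [Subgroup.commutator_comm]
    exact commutator_top_powSeries_le hp hG j
  | succ k ih =>
    rw [← Subgroup.closure_eq (powSeries p G j)]
    refine commutator_closure_closure_le ?_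
    rintro g hg _ ⟨x, hx, rfl⟩
    have hu : ⁅g, x⁆ ∈ powSeries p G (j + k + 1) := ih (Subgroup.commutator_mem_commutator hg hx)
    have hw : ⁅x, ⁅g, x⁆⁆ ∈ powSeries p G (j + (k + 1) + 1) :=
      commutator_top_powSeries_le hp hG (j + k + 1)
        (Subgroup.commutator_mem_commutator (Subgroup.mem_top x) hu)
    exact commutatorElement_pow_right_mem_of_odd hp (commutatorElement_mem_of_mem_left hw _)
      (commutatorElement_mem_of_mem_left hw _) (pow_mem hw p) (pow_mem_subgroupPow hu p)

theorem exists_inv_pow_mul_mem_powSeries_two (hp : Odd p) (hG : commutator G ≤ subgroupPow ⊤ p)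
    {g : G} (hg : g ∈ subgroupPow (⊤ : Subgroup G) p) :
    ∃ x : G, (x ^ p)⁻¹ * g ∈ powSeries p G 2 := by
  have hmul (a b : G ⧸ powSeries p G 2) : (a * b) ^ p = a ^ p * b ^ p := by
    obtain ⟨a, rfl⟩ := QuotientGroup.mk_surjective a
    obtain ⟨b, rfl⟩ := QuotientGroup.mk_surjective b
    have hw : ⁅b, a⁆ ∈ powSeries p G 1 :=
      hG (Subgroup.commutator_mem_commutator (Subgroup.mem_top b) (Subgroup.mem_top a))
    have hw' (z : G) : ⁅⁅b, a⁆, z⁆ ∈ powSeries p G 2 :=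
      commutator_powSeries_le hp hG 1 0
        (Subgroup.commutator_mem_commutator hw (Subgroup.mem_top z))
    exact mk_mul_pow_of_odd hp (hw' b) (hw' a) (pow_mem_subgroupPow hw p)
  have hgbar : (g : G ⧸ powSeries p G 2) ∈ subgroupPow ⊤ p :=
    subgroupPow_mono le_top p
      (map_subgroupPow (QuotientGroup.mk' (powSeries p G 2)) ⊤ p ▸ Subgroup.mem_map_of_mem _ hg)
  obtain ⟨xbar, hx⟩ := exists_pow_eq_of_mem_subgroupPow_top hmul hgbar
  obtain ⟨x, rfl⟩ := QuotientGroup.mk_surjective xbar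
  exact ⟨x, QuotientGroup.eq.1 hx⟩

theorem commutator_zpowers_sup_powSeries_one_le (hp : Odd p) (hG : commutator G ≤ subgroupPow ⊤ p)
    (y : G) :
    ⁅Subgroup.zpowers y ⊔ powSeries p G 1, Subgroup.zpowers y ⊔ powSeries p G 1⁆ ≤
      subgroupPow (Subgroup.zpowers y ⊔ powSeries p G 1) p :=
  (commutator_zpowers_sup_le (commutator_top_powSeries_le hp hG 1) y).trans
    (subgroupPow_mono le_sup_right p)

end PowSeries

/-! ### `p`-th powers are non-generators -/

section Frattini

variable {G : Type*} [Group G] [Finite G] {p : ℕ}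

theorem exists_normal_index_eq_prime_of_ne_top (hp : p.Prime) (hG : IsPGroup p G) {H : Subgroup G}
    (hH : H ≠ ⊤) : ∃ K : Subgroup G, K.Normal ∧ K.index = p ∧ H ≤ K := by
  have := Fact.mk hp
  obtain ⟨n, hn⟩ := IsPGroup.iff_card.1 hG
  obtain ⟨m, hm⟩ := IsPGroup.iff_card.1 (hG.to_subgroup H)
  have hmn : m < n := by
    rw [← Nat.pow_lt_pow_iff_right hp.one_lt, ← hn, ← hm]
    exact lt_of_not_ge (mt (Subgroup.eq_top_of_le_card H) hH)
  obtain ⟨k, rfl⟩ : ∃ k, n = k + 1 := Nat.exists_eq_add_one.2 (Nat.zero_lt_of_lt hmn)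
  obtain ⟨K, hK, hHK⟩ := Sylow.exists_subgroup_card_pow_prime_le p
    (hn ▸ pow_dvd_pow p (Nat.le_succ k)) H hm (Nat.le_of_lt_succ hmn)
  have hindex : K.index = p := by
    have hcard := K.card_mul_index
    rw [hK, hn, pow_succ] at hcard
    exact Nat.eq_of_mul_eq_mul_left (pow_pos hp.pos k) hcard
  refine ⟨K, Subgroup.normal_of_index_eq_minFac_card ?_, hindex, hHK⟩
  rw [hindex, hn, hp.pow_minFac k.succ_ne_zero]

theorem eq_top_of_sup_subgroupPow_eq_top (hp : p.Prime) (hG : IsPGroup p G) {H : Subgroup G}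
    (h : H ⊔ subgroupPow ⊤ p = ⊤) : H = ⊤ := by
  by_contra hH
  obtain ⟨K, _, hindex, hHK⟩ := exists_normal_index_eq_prime_of_ne_top hp hG hH
  have hpow : subgroupPow ⊤ p ≤ K := subgroupPow_le_iff.2 fun x _ => hindex ▸ K.pow_index_mem x
  have hK : K = ⊤ := top_le_iff.1 (h ▸ sup_le hHK hpow)
  exact hp.one_lt.ne (hindex ▸ (Subgroup.index_eq_one.2 hK).symm)

theorem commute_of_zpowers_sup_subgroupPow_eq_top (hp : p.Prime) (hG : IsPGroup p G) {y : G}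
    (h : Subgroup.zpowers y ⊔ subgroupPow ⊤ p = ⊤) (a b : G) : Commute a b := by
  have htop := eq_top_of_sup_subgroupPow_eq_top hp hG h
  obtain ⟨r, rfl⟩ := Subgroup.mem_zpowers_iff.1 (htop ▸ Subgroup.mem_top a)
  obtain ⟨s, rfl⟩ := Subgroup.mem_zpowers_iff.1 (htop ▸ Subgroup.mem_top b)
  exact (Commute.refl y).zpow_zpow r s

end Frattini

/-! ### Powerful `p`-groups for odd `p` -/

/-- Powerful `p`-groups for an odd prime `p`, with the standing assumptions bundled so that they can
be passed to powerful subgroups together. -/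
structure IsOddPowerful (p : ℕ) (G : Type*) [Group G] : Prop where
  prime : p.Prime
  ne_two : p ≠ 2
  isPGroup : IsPGroup p G
  isPowerful : IsPowerful p G

/-- The conclusion of Wilson's theorem for a subgroup `H`: for every `m`, the exponent of `Ω_m(H)`
divides `p ^ m`. -/
def OmegaExponentDvd (p : ℕ) {G : Type*} [Group G] (H : Subgroup G) : Prop :=
  ∀ m, ∀ x ∈ omegaSubgroup p m H, x ^ p ^ m = 1

/-- The induction hypothesis in the proof of Wilson's theorem: the proper powerful subgroups of `G`
satisfy its conclusion. -/
def ProperOmegaExponentDvd (p : ℕ) (G : Type*) [Group G] : Prop :=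
  ∀ H : Subgroup G, H ≠ ⊤ → IsOddPowerful p H → OmegaExponentDvd p H

/-- The order estimate for commutators of powers, for a fixed value `s` of the sum of the
exponents; the descending induction which proves it runs over `s`. -/
def CommutatorPowBound (p : ℕ) (G : Type*) [Group G] (s : ℕ) : Prop :=
  ∀ m j k, m + j + k = s → ∀ x y : G, x ^ p ^ (s + 1) = 1 → y ^ p ^ s = 1 →
    ⁅x ^ p ^ j, y ^ p ^ k⁆ ^ p ^ m = 1

namespace OmegaExponentDvd

variable {G : Type*} [Group G] {p : ℕ}

theorem of_mul_pow_eq_one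
    (h : ∀ (m : ℕ) (x y : G), x ^ p ^ m = 1 → y ^ p ^ m = 1 → (x * y) ^ p ^ m = 1) :
    OmegaExponentDvd p (⊤ : Subgroup G) := by
  intro m x hx
  induction hx using Subgroup.closure_induction with
  | mem x hx => exact hx.2
  | one => exact one_pow _
  | mul x y _ _ hx hy => exact h m x y hx hy
  | inv x _ hx => rw [inv_pow, hx, inv_one]

theorem of_top {H : Subgroup G} (h : OmegaExponentDvd p (⊤ : Subgroup H)) :
    OmegaExponentDvd p H := by
  intro m x hx
  obtain ⟨y, hy, rfl⟩ := omegaSubgroup_le_map_subtype p m H hx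
  rw [← map_pow, h m y hy, map_one]

end OmegaExponentDvd

namespace IsOddPowerful

variable {G : Type*} [Group G] {p : ℕ}

theorem odd (hG : IsOddPowerful p G) : Odd p :=
  hG.prime.odd_of_ne_two hG.ne_two

theorem commutator_le (hG : IsOddPowerful p G) : commutator G ≤ subgroupPow ⊤ p := by
  simpa only [IsPowerful, if_neg hG.ne_two] using hG.isPowerful

theorem subgroup (hG : IsOddPowerful p G) {H : Subgroup G} (hH : ⁅H, H⁆ ≤ subgroupPow H p) :
    IsOddPowerful p H where
  prime := hG.prime
  ne_two := hG.ne_two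
  isPGroup := hG.isPGroup.to_subgroup H
  isPowerful := by
    rw [IsPowerful, if_neg hG.ne_two]
    exact commutator_coe_le_subgroupPow_iff.2 hH

theorem commutatorElement_mem_powSeries_one (hG : IsOddPowerful p G) (x y : G) :
    ⁅x, y⁆ ∈ powSeries p G 1 :=
  hG.commutator_le
    (Subgroup.commutator_mem_commutator (Subgroup.mem_top x) (Subgroup.mem_top y))

variable [Finite G]

theorem isNilpotent (hG : IsOddPowerful p G) : Group.IsNilpotent G :=
  have := Fact.mk hG.prime
  hG.isPGroup.isNilpotent

theorem commutatorElement_mem_powSeries (hG : IsOddPowerful p G) {j k : ℕ} {x y : G}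
    (hx : x ∈ powSeries p G j) (hy : y ∈ powSeries p G k) : ⁅x, y⁆ ∈ powSeries p G (j + k + 1) :=
  have := hG.isNilpotent
  commutator_powSeries_le hG.odd hG.commutator_le j k (Subgroup.commutator_mem_commutator hx hy)

theorem subgroup_powSeries (hG : IsOddPowerful p G) (k : ℕ) : IsOddPowerful p (powSeries p G k) :=
  have := hG.isNilpotent
  hG.subgroup ((Subgroup.commutator_mono le_top le_rfl).trans
    (commutator_top_powSeries_le hG.odd hG.commutator_le k))

theorem subgroup_zpowers_sup (hG : IsOddPowerful p G) (y : G) :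
    IsOddPowerful p (Subgroup.zpowers y ⊔ powSeries p G 1 : Subgroup G) :=
  have := hG.isNilpotent
  hG.subgroup (commutator_zpowers_sup_powSeries_one_le hG.odd hG.commutator_le y)

-- For `g ∈ x ^ p P_2`, induct on the order of `G`: `g` lies in `H^p` for the powerful subgroup
-- `H = ⟨x⟩ G^p`, and `H` is proper unless `G` is cyclic.
theorem exists_pow_eq (hG : IsOddPowerful p G) {g : G} (hg : g ∈ subgroupPow (⊤ : Subgroup G) p) :
    ∃ x : G, x ^ p = g := by
  induction hcard : Nat.card G using Nat.strong_induction_on generalizing G with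
  | _ n ih =>
    have := hG.isNilpotent
    obtain ⟨x, hx⟩ := exists_inv_pow_mul_mem_powSeries_two hG.odd hG.commutator_le hg
    by_cases htop : Subgroup.zpowers x ⊔ powSeries p G 1 = ⊤
    · have hcomm := commute_of_zpowers_sup_subgroupPow_eq_top hG.prime hG.isPGroup htop
      exact exists_pow_eq_of_mem_subgroupPow_top (fun a b => (hcomm a b).mul_pow p) hg
    · set H := Subgroup.zpowers x ⊔ powSeries p G 1
      have hxH : x ^ p ∈ subgroupPow H p :=
        pow_mem_subgroupPow (Subgroup.mem_sup_left (Subgroup.mem_zpowers x)) p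
      have hgH : g ∈ subgroupPow H p :=
        (Subgroup.mul_mem_cancel_left _ (inv_mem hxH)).1 (subgroupPow_mono le_sup_right p hx)
      rw [← map_subtype_subgroupPow_top] at hgH
      obtain ⟨h, hh, rfl⟩ := hgH
      have hlt : Nat.card H < n := hcard ▸ lt_of_not_ge (mt (Subgroup.eq_top_of_le_card H) htop)
      obtain ⟨z, rfl⟩ := ih _ hlt (hG.subgroup_zpowers_sup x) hh rfl
      exact ⟨z, rfl⟩

theorem exists_mem_powSeries_pow_eq (hG : IsOddPowerful p G) {j k : ℕ} {g : G}
    (hg : g ∈ powSeries p G (j + k)) : ∃ x ∈ powSeries p G j, x ^ p ^ k = g := by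
  induction k generalizing g with
  | zero => exact ⟨g, hg, by rw [pow_zero, pow_one]⟩
  | succ k ih =>
    have hg' : g ∈ subgroupPow (powSeries p G (j + k)) p := hg
    rw [← map_subtype_subgroupPow_top] at hg'
    obtain ⟨h, hh, rfl⟩ := hg'
    obtain ⟨z, rfl⟩ := (hG.subgroup_powSeries (j + k)).exists_pow_eq hh
    obtain ⟨x, hx, hxz⟩ := ih z.2
    exact ⟨x, hx, by rw [pow_succ, pow_mul, hxz]; rfl⟩

theorem exists_pow_pow_eq (hG : IsOddPowerful p G) {k : ℕ} {g : G}
    (hg : g ∈ powSeries p G k) : ∃ x : G, x ^ p ^ k = g := by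
  obtain ⟨x, -, hx⟩ := hG.exists_mem_powSeries_pow_eq (j := 0) ((zero_add k).symm ▸ hg)
  exact ⟨x, hx⟩

theorem powSeries_eq_subgroupPow (hG : IsOddPowerful p G) (k : ℕ) :
    powSeries p G k = subgroupPow ⊤ (p ^ k) := by
  refine le_antisymm (fun g hg => ?_) (subgroupPow_le_iff.2 fun x _ => pow_pow_mem_powSeries x k)
  obtain ⟨x, rfl⟩ := hG.exists_pow_pow_eq hg
  exact pow_mem_subgroupPow (Subgroup.mem_top x) _

/-! ### Orders of commutators and Wilson's theorem -/

theorem omegaExponentDvd_powSeries_one (hG : IsOddPowerful p G)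
    (hproper : ProperOmegaExponentDvd p G) : OmegaExponentDvd p (powSeries p G 1) := by
  by_cases htop : powSeries p G 1 = ⊤
  · have hbot : (⊥ : Subgroup G) = ⊤ :=
      eq_top_of_sup_subgroupPow_eq_top hG.prime hG.isPGroup ((bot_sup_eq _).trans htop)
    intro m x _
    exact Subgroup.mem_bot.1 (hbot ▸ Subgroup.mem_top _)
  · exact hproper _ htop (hG.subgroup_powSeries 1)

theorem commutatorElement_pow_eq_one (hG : IsOddPowerful p G)
    (hproper : ProperOmegaExponentDvd p G) {m : ℕ} (x : G) {y : G} (hy : y ^ p ^ m = 1) :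
    ⁅x, y⁆ ^ p ^ m = 1 := by
  by_cases htop : Subgroup.zpowers y ⊔ powSeries p G 1 = ⊤
  · have hcomm := commute_of_zpowers_sup_subgroupPow_eq_top hG.prime hG.isPGroup htop
    rw [(hcomm x y).commutator_eq, one_pow]
  · set H := Subgroup.zpowers y ⊔ powSeries p G 1
    have hyH : y ∈ H := Subgroup.mem_sup_left (Subgroup.mem_zpowers y)
    have hconj : x * y * x⁻¹ ∈ H := by
      rw [← inv_mul_cancel_right (x * y * x⁻¹) y, ← commutatorElement_def]
      exact mul_mem (Subgroup.mem_sup_right (hG.commutatorElement_mem_powSeries_one x y)) hyH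
    refine hproper H htop (hG.subgroup_zpowers_sup y) m _ ?_
    rw [commutatorElement_def]
    exact mul_mem
      (mem_omegaSubgroup hconj (by rw [conj_pow, hy, mul_one, mul_inv_cancel]))
      (inv_mem (mem_omegaSubgroup hyH hy))

theorem commutatorElement_mem_omegaSubgroup_of_commutatorPowBound (hG : IsOddPowerful p G)
    {s m l k : ℕ} (hbound : CommutatorPowBound p G s) (hs : m + l + k = s) {w z : G}
    (hw : w ∈ powSeries p G l) (hwpow : w ^ p ^ (m + k + 1) = 1) (hz : z ^ p ^ s = 1) :
    ⁅w, z ^ p ^ k⁆ ∈ omegaSubgroup p m (powSeries p G 1) := by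
  refine mem_omegaSubgroup (hG.commutatorElement_mem_powSeries_one _ _) ?_
  obtain ⟨v, rfl⟩ := hG.exists_pow_pow_eq hw
  refine hbound m l k hs v z ?_ hz
  rwa [← pow_mul, ← pow_add, show l + (m + k + 1) = s + 1 by omega] at hwpow

theorem commutatorElement_pow_succ_pow_eq_one (hG : IsOddPowerful p G)
    (hproper : ProperOmegaExponentDvd p G) {s m j k : ℕ}
    (ih : ∀ t > s, CommutatorPowBound p G t) (hs : m + (j + 1) + k = s) {b z : G}
    (hz : z ^ p ^ (s + 1) = 1) (hb : b ∈ powSeries p G k)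
    (hu : ⁅b, z ^ p ^ j⁆ ^ p ^ (m + 1) = 1) : ⁅b, z ^ p ^ (j + 1)⁆ ^ p ^ m = 1 := by
  set c := z ^ p ^ j with hc
  set u := ⁅b, c⁆
  have hcmem : c ∈ powSeries p G j := pow_pow_mem_powSeries z j
  have humem : u ∈ powSeries p G (k + j + 1) := hG.commutatorElement_mem_powSeries hb hcmem
  have hwmem : ⁅c, u⁆ ∈ powSeries p G (j + (k + j + 1) + 1) :=
    hG.commutatorElement_mem_powSeries hcmem humem
  have hw : ⁅c, u⁆ ^ p ^ (m + 1) = 1 := hG.commutatorElement_pow_eq_one hproper c hu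
  have hwc : ⁅⁅c, u⁆, c⁆ ∈ omegaSubgroup p m (powSeries p G 1) :=
    hG.commutatorElement_mem_omegaSubgroup_of_commutatorPowBound (ih _ (by omega)) rfl hwmem
      (pow_pow_eq_one_of_le hw (by omega)) (pow_pow_eq_one_of_le hz (by omega))
  obtain ⟨v, hv⟩ := hG.exists_pow_pow_eq humem
  have hvpow : v ^ p ^ (k + j + 1 + (m + 1)) = 1 := by rw [pow_add, pow_mul, hv, hu]
  have hwu : ⁅⁅c, u⁆, u⁆ ∈ omegaSubgroup p m (powSeries p G 1) := by
    rw [← hv] at hwmem hw ⊢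
    exact hG.commutatorElement_mem_omegaSubgroup_of_commutatorPowBound (ih _ (by omega)) rfl hwmem
      (pow_pow_eq_one_of_le hw (by omega)) (pow_pow_eq_one_of_le hvpow (by omega))
  rw [pow_succ, pow_mul, ← hc]
  exact hG.omegaExponentDvd_powSeries_one hproper m _
    (commutatorElement_pow_right_mem_of_odd hG.odd hwc hwu
      (pow_mem_omegaSubgroup (pow_mem_subgroupPow (Subgroup.mem_top _) p) hw)
      (pow_mem_omegaSubgroup (pow_mem_subgroupPow (Subgroup.mem_top _) p) hu))

theorem commutatorPowBound_of_forall_gt (hG : IsOddPowerful p G)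
    (hproper : ProperOmegaExponentDvd p G) {s : ℕ} (ih : ∀ t > s, CommutatorPowBound p G t) :
    CommutatorPowBound p G s := by
  intro m j k hs x y hx hy
  induction j generalizing m with
  | zero =>
    induction k generalizing m with
    | zero =>
      rw [pow_zero, pow_one, pow_one]
      exact hG.commutatorElement_pow_eq_one hproper x (pow_pow_eq_one_of_le hy (by omega))
    | succ k ihk =>
      exact hG.commutatorElement_pow_succ_pow_eq_one hproper ih (k := 0) (by omega)
        (pow_pow_eq_one_of_le hy s.le_succ) (Subgroup.mem_top _) (ihk (m + 1) (by omega))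
  | succ j ihj =>
    have hprev := ihj (m + 1) (by omega)
    rw [← commutatorElement_inv, inv_pow, inv_eq_one] at hprev ⊢
    exact hG.commutatorElement_pow_succ_pow_eq_one hproper ih hs hx
      (pow_pow_mem_powSeries y k) hprev

theorem commutatorPowBound_of_card_eq_prime_pow (hG : IsOddPowerful p G) {e s : ℕ}
    (hcard : Nat.card G = p ^ e) (hes : e ≤ s) : CommutatorPowBound p G s := by
  intro m j k hs x y _ _
  obtain ⟨g, hg⟩ := hG.exists_pow_pow_eq
    (hG.commutatorElement_mem_powSeries (pow_pow_mem_powSeries x j) (pow_pow_mem_powSeries y k))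
  rw [← hg, ← pow_mul, ← pow_add]
  exact pow_pow_eq_one_of_le (hcard ▸ pow_card_eq_one') (by omega : e ≤ j + k + 1 + m)

theorem commutatorPowBound (hG : IsOddPowerful p G) (hproper : ProperOmegaExponentDvd p G)
    (s : ℕ) : CommutatorPowBound p G s := by
  have := Fact.mk hG.prime
  obtain ⟨e, he⟩ := IsPGroup.iff_card.1 hG.isPGroup
  have hgap : ∀ d s, e ≤ s + d → CommutatorPowBound p G s := by
    intro d
    induction d with
    | zero => exact fun s hs => hG.commutatorPowBound_of_card_eq_prime_pow he hs
    | succ d ih =>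
      exact fun s hs => hG.commutatorPowBound_of_forall_gt hproper fun t ht => ih t (by omega)
  exact hgap e s (Nat.le_add_left e s)

theorem mul_pow_mem_omegaSubgroup (hG : IsOddPowerful p G) (hproper : ProperOmegaExponentDvd p G)
    {m : ℕ} {x y : G} (hx : x ^ p ^ (m + 1) = 1) (hy : y ^ p ^ (m + 1) = 1) :
    (x * y) ^ p ∈ omegaSubgroup p m (powSeries p G 1) := by
  set M := omegaSubgroup p m (powSeries p G 1)
  have hpow {g : G} (hg : g ^ p ^ (m + 1) = 1) : g ^ p ∈ M :=
    pow_mem_omegaSubgroup (pow_mem_subgroupPow (Subgroup.mem_top g) p) hg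
  have hw : ⁅y, x⁆ ^ p ^ (m + 1) = 1 := hG.commutatorElement_pow_eq_one hproper y hx
  have hcomm {z : G} (hz : z ^ p ^ (m + 1) = 1) : ⁅⁅y, x⁆, z⁆ ∈ M := by
    rw [← pow_one z, ← pow_zero p]
    exact hG.commutatorElement_mem_omegaSubgroup_of_commutatorPowBound
      (hG.commutatorPowBound hproper (m + 1)) rfl (hG.commutatorElement_mem_powSeries_one y x) hw hz
  rw [← QuotientGroup.eq_one_iff, QuotientGroup.mk_pow, QuotientGroup.mk_mul,
    mk_mul_pow_of_odd hG.odd (hcomm hy) (hcomm hx) (hpow hw), ← QuotientGroup.mk_pow,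
    ← QuotientGroup.mk_pow, (QuotientGroup.eq_one_iff _).2 (hpow hx),
    (QuotientGroup.eq_one_iff _).2 (hpow hy), one_mul]

theorem omegaExponentDvd_top (hG : IsOddPowerful p G) :
    OmegaExponentDvd p (⊤ : Subgroup G) := by
  induction hcard : Nat.card G using Nat.strong_induction_on generalizing G with
  | _ n ih =>
    have hproper : ProperOmegaExponentDvd p G := fun H hH hHpow =>
      .of_top (ih _ (hcard ▸ lt_of_not_ge (mt (Subgroup.eq_top_of_le_card H) hH)) hHpow rfl)
    refine .of_mul_pow_eq_one fun m x y hx hy => ?_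
    cases m with
    | zero =>
      rw [pow_zero, pow_one] at hx hy ⊢
      rw [hx, hy, one_mul]
    | succ m =>
      rw [pow_succ', pow_mul]
      exact hG.omegaExponentDvd_powSeries_one hproper m _
        (hG.mul_pow_mem_omegaSubgroup hproper hx hy)

theorem commutatorElement_pow_pow_eq_one (hG : IsOddPowerful p G) {m j k : ℕ} {x y : G}
    (hx : x ^ p ^ (m + j + k + 1) = 1) (hy : y ^ p ^ (m + j + k) = 1) :
    ⁅x ^ p ^ j, y ^ p ^ k⁆ ^ p ^ m = 1 :=
  hG.commutatorPowBound (fun _ _ hH => .of_top hH.omegaExponentDvd_top) _ m j k rfl x y hx hy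

theorem commutatorElement_mem_subgroupPow_omegaSubgroup (hG : IsOddPowerful p G) {i j k : ℕ}
    (hkj : k < j) {a b : G} (ha : a ∈ powSeries p G j) (hb : b ∈ powSeries p G k)
    (hai : a ^ p ^ i = 1) (hbi : b ^ p ^ i = 1) :
    ⁅a, b⁆ ∈ subgroupPow (omegaSubgroup p i (powSeries p G j)) (p ^ (k + 1)) := by
  have hab : ⁅a, b⁆ ^ p ^ (i - (k + 1)) = 1 := by
    obtain ⟨x, rfl⟩ := hG.exists_pow_pow_eq ha
    obtain ⟨y, rfl⟩ := hG.exists_pow_pow_eq hb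
    rw [← pow_mul, ← pow_add] at hai hbi
    exact hG.commutatorElement_pow_pow_eq_one (pow_pow_eq_one_of_le hai (by omega))
      (pow_pow_eq_one_of_le hbi (by omega))
  -- For `i ≤ k` the truncated `i - (k + 1) = 0` makes `hab` say `⁅a, b⁆ = 1`.
  obtain hik | hik := Nat.lt_or_ge k i
  · obtain ⟨g, hg, hgab⟩ := hG.exists_mem_powSeries_pow_eq (j := j) (k := k + 1)
      (hG.commutatorElement_mem_powSeries ha hb)
    rw [← hgab, ← pow_mul, ← pow_add, Nat.add_sub_cancel' hik] at hab
    exact hgab ▸ pow_mem_subgroupPow (mem_omegaSubgroup hg hab) _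
  · rw [Nat.sub_eq_zero_of_le (Nat.le_succ_of_le hik), pow_zero, pow_one] at hab
    exact hab ▸ one_mem _

end IsOddPowerful

theorem omega_statement_5_general (p : ℕ) (hp : p.Prime) (hp2 : p ≠ 2) (G : Type*) [Group G]
    [Finite G] (hG : IsPGroup p G) (hpow : IsPowerful p G) (i : ℕ) {j k : ℕ} (hkj : k < j) :
    ⁅omegaSubgroup p i (subgroupPow (⊤ : Subgroup G) (p ^ j)),
        omegaSubgroup p i (subgroupPow (⊤ : Subgroup G) (p ^ k))⁆ ≤
      subgroupPow (omegaSubgroup p i (subgroupPow (⊤ : Subgroup G) (p ^ j))) (p ^ (k + 1)) := by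
  have hpowerful : IsOddPowerful p G := ⟨hp, hp2, hG, hpow⟩
  rw [← hpowerful.powSeries_eq_subgroupPow j, ← hpowerful.powSeries_eq_subgroupPow k]
  exact commutator_closure_closure_le fun a ha b hb =>
    hpowerful.commutatorElement_mem_subgroupPow_omegaSubgroup hkj ha.1 hb.1 ha.2 hb.2

theorem omega_statement_5 (p : ℕ) (hp : p.Prime) (hp2 : p ≠ 2) (G : Type*) [Group G]
    [Finite G] (hG : IsPGroup p G) (hpow : IsPowerful p G) (i : ℕ) (hi : 1 ≤ i) :
    ⁅omegaSubgroup p i (subgroupPow (⊤ : Subgroup G) (p ^ 2)),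
        omegaSubgroup p i (subgroupPow (⊤ : Subgroup G) p)⁆ ≤
      subgroupPow (omegaSubgroup p i (subgroupPow (⊤ : Subgroup G) p)) (p ^ 2) := by
  have h := omega_statement_5_general p hp hp2 G hG hpow i one_lt_two
  rw [pow_one] at h
  exact h.trans (subgroupPow_mono
    (omegaSubgroup_mono p i (subgroupPow_le_of_dvd ⊤ (dvd_pow_self p two_ne_zero))) _)
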